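/- arXiv:1001.0304 — 4 statements merged into one kernel-verified Lean document; each statement's English description precedes it below -/
import Mathlib

section
/- Let $A_1,\ldots,A_m$ be real $n\times n$ matrices and let $\mathbf{A} = \{\sum_{k=1}^m q_k A_k : q \in S_m\}$ where $S_m = \{q \in \mathbb{R}^m : \sum_i q_i = 1,\ q_i \ge 0\}$. Suppose $\mathbf{A}$ contains at least one Hurwitz stable matrix. For $q \in S_m$ write $f_{A(q)}(s) = \det(sI_n - \sum_k q_k A_k) = s^n + a_{n-1}(q)s^{n-1} + \cdots + a_0(q)$, and let $\Delta_{n-1}(q)$ be the $(n-1)$-th leading principal minor of the Hurwitz matrix of $f_{A(q)}$. Then every matrix in $\mathbf{A}$ is Hurwitz stable if and only if $\Delta_{n-1}(q) > 0$ and $a_0(q) > 0$ for all $q \in S_m$. -/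
/-!
Let `f` have degree `n = k + 1`, and read a row vector as the coefficient list of a polynomial `U`
of degree less than `k`. Multiplying it by the leading `k × k` block of the Hurwitz matrix of `f`
gives the odd coefficients of `f U`, so `Δ_{n-1} = 0` iff `f U` is even for some such `U ≠ 0`.

* If all roots of `f` have negative real part, then `f(x)` and `f(-x)` are coprime, so evenness of
  `f U` would force `f(-x) ∣ U(x)`, against the degrees: `Δ_{n-1} ≠ 0`.
* If `f = (x² + ω²) h` with `ω ≠ 0`, then `U(x) = h(-x)` shows that `Δ_{n-1} = 0`.

For stable `f` with positive leading coefficient, `Δ_{n-1}` is even positive: deforming a factor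
`x + c` or `x² + b x + c` of `f` into `t x + c` or `t x² + b x + c` keeps `f` stable, and at `t = 0`
the degree has dropped by one, so an induction applies.

Conversely, if `Δ_{n-1} > 0` and `a₀ > 0` on a connected set of matrices, no eigenvalue is purely
imaginary, so each member either is stable or has an eigenvalue of positive real part. By continuity
of roots these are two disjoint open conditions, and only one of them occurs.
-/

open Polynomial Matrix

/-- The `n × n` Hurwitz matrix of a real polynomial `f = a_n x^n + ⋯ + a_0`:
its `(i,j)` entry (with `1`-based indices) is `a_{n - 2j + i}`, with the convention
that `a_k = 0` for `k < 0` or `k > n`. Here `i j : Fin n` are `0`-based. -/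
noncomputable def hurwitzMatrix (n : ℕ) (f : Polynomial ℝ) : Matrix (Fin n) (Fin n) ℝ :=
  fun i j =>
    let e : ℤ := (n : ℤ) - 2 * ((j : ℕ) + 1) + ((i : ℕ) + 1)
    if 0 ≤ e ∧ e ≤ (n : ℤ) then f.coeff e.toNat else 0

/-- The `k`-th leading principal minor of a square matrix. -/
noncomputable def leadingPrincipalMinor {n : ℕ} (M : Matrix (Fin n) (Fin n) ℝ)
    (k : ℕ) (hk : k ≤ n) : ℝ :=
  (M.submatrix (Fin.castLE hk) (Fin.castLE hk)).det

/-- A real matrix is Hurwitz stable if all of its complex eigenvalues (i.e. the roots of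
its characteristic polynomial over `ℂ`) have negative real part. -/
def IsHurwitzStable {n : ℕ} (A : Matrix (Fin n) (Fin n) ℝ) : Prop :=
  ∀ μ : ℂ, ((A.charpoly).map (algebraMap ℝ ℂ)).IsRoot μ → μ.re < 0

section HurwitzBlock

variable {R : Type*}

/-- The leading `k × k` block of the Hurwitz matrix of a polynomial of formal degree `k + 1`. With
`0`-based indices its `(i, j)` entry is the coefficient of index `k + i - 2j`, and `0` when that
index is negative. -/
def hurwitzBlock [Semiring R] (k : ℕ) (f : R[X]) : Matrix (Fin k) (Fin k) R :=
  fun i j => if 2 * (j : ℕ) ≤ k + i then f.coeff (k + i - 2 * j) else 0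

lemma leadingPrincipalMinor_hurwitzMatrix {n : ℕ} {f : ℝ[X]} (hf : f.natDegree ≤ n) :
    leadingPrincipalMinor (hurwitzMatrix n f) (n - 1) (Nat.sub_le n 1) =
      (hurwitzBlock (n - 1) f).det := by
  rw [leadingPrincipalMinor]
  congr 1
  ext i j
  simp only [submatrix_apply, hurwitzMatrix, hurwitzBlock, Fin.val_castLE]
  by_cases hij : 2 * (j : ℕ) ≤ n - 1 + i
  · have hidx : ((n : ℤ) - 2 * ((j : ℕ) + 1) + ((i : ℕ) + 1)).toNat = n - 1 + i - 2 * j := by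
      omega
    rw [if_pos hij, hidx]
    split_ifs with h
    · rfl
    · rw [coeff_eq_zero_of_natDegree_lt (by omega)]
  · rw [if_neg hij, if_neg (by omega)]

lemma vecMul_hurwitzBlock [CommSemiring R] {k : ℕ} (f : R[X]) {U : R[X]} (hU : U.degree < k)
    (j : Fin k) :
    ((fun i : Fin k => U.coeff i.rev) ᵥ* hurwitzBlock k f) j =
      (f * U).coeff (2 * j.rev + 1) := by
  have hsum : U = ∑ i : Fin k, C (U.coeff i.rev) * X ^ (i.rev : ℕ) := by
    simp_rw [C_mul_X_pow_eq_monomial]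
    have hrev := Equiv.sum_comp Fin.revPerm fun i : Fin k => monomial (i : ℕ) (U.coeff i)
    simp only [Fin.revPerm_apply] at hrev
    rw [hrev, U.sum_fin (fun i a => monomial i a) (by simp) hU, sum_monomial_eq]
  conv_rhs => rw [hsum, Finset.mul_sum, finsetSum_coeff]
  rw [vecMul, dotProduct]
  refine Finset.sum_congr rfl fun i _ => ?_
  rw [mul_left_comm, coeff_C_mul, coeff_mul_X_pow', hurwitzBlock]
  simp only [Fin.val_rev]
  congr 1
  split_ifs
  · congr 1
    omega
  · omega
  · omega
  · rfl

lemma vecMul_hurwitzBlock_eq_zero_iff [CommSemiring R] {k : ℕ} {f U : R[X]}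
    (hf : f.natDegree ≤ k + 1) (hU : U.degree < k) :
    (fun i : Fin k => U.coeff i.rev) ᵥ* hurwitzBlock k f = 0 ↔
      ∀ d, (f * U).coeff (2 * d + 1) = 0 := by
  constructor
  · intro h d
    by_cases hd : d < k
    · have hrow := congrFun h (Fin.rev ⟨d, hd⟩)
      rwa [vecMul_hurwitzBlock f hU, Fin.rev_rev] at hrow
    · rcases eq_or_ne U 0 with rfl | hU0
      · simp
      have hUk : U.natDegree < k := (natDegree_lt_iff_degree_lt hU0).2 hU
      have hfU : (f * U).natDegree ≤ f.natDegree + U.natDegree := natDegree_mul_le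
      exact coeff_eq_zero_of_natDegree_lt (by omega)
  · intro h
    ext j
    rw [vecMul_hurwitzBlock f hU, h, Pi.zero_apply]

lemma comp_neg_X_eq_self_iff [CommRing R] [NoZeroDivisors R] [CharZero R] {p : R[X]} :
    p.comp (-X) = p ↔ ∀ d, p.coeff (2 * d + 1) = 0 := by
  have hcoeff (d : ℕ) : (p.comp (-X)).coeff d = p.coeff d * (-1) ^ d := by
    rw [← comp_C_mul_X_coeff, C_neg, C_1, neg_one_mul]
  constructor
  · intro h d
    have hneg := hcoeff (2 * d + 1)
    rw [h, (odd_two_mul_add_one d).neg_one_pow, mul_neg_one] at hneg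
    exact self_eq_neg.1 hneg
  · intro h
    ext d
    rcases Nat.even_or_odd' d with ⟨e, rfl | rfl⟩
    · rw [hcoeff, (even_two_mul e).neg_one_pow, mul_one]
    · rw [hcoeff, h, zero_mul]

lemma det_hurwitzBlock_eq_zero_iff [CommRing R] [IsDomain R] [CharZero R] {k : ℕ} {f : R[X]}
    (hf : f.natDegree ≤ k + 1) :
    (hurwitzBlock k f).det = 0 ↔
      ∃ U : R[X], U ≠ 0 ∧ U.degree < k ∧ (f * U).comp (-X) = f * U := by
  rw [← exists_vecMul_eq_zero_iff]
  constructor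
  · rintro ⟨u, hu, hmul⟩
    obtain ⟨⟨U, hU⟩, hUu⟩ := (degreeLTEquiv R k).surjective (u ∘ Fin.rev)
    rw [mem_degreeLT] at hU
    have hrow : (fun i : Fin k => U.coeff i.rev) = u := by
      ext i
      exact (congrFun hUu i.rev).trans (congrArg u i.rev_rev)
    refine ⟨U, ?_, hU, ?_⟩
    · rintro rfl
      exact hu (by simpa [funext_iff, eq_comm] using hrow)
    · rw [comp_neg_X_eq_self_iff, ← vecMul_hurwitzBlock_eq_zero_iff hf hU, hrow, hmul]
  · rintro ⟨U, hU0, hU, heven⟩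
    refine ⟨fun i => U.coeff i.rev, fun hrow => hU0 ?_, ?_⟩
    · rw [← degreeLTEquiv_eq_zero_iff_eq_zero (mem_degreeLT.2 hU)]
      ext i
      have hi := congrFun hrow i.rev
      rwa [Fin.rev_rev] at hi
    · rwa [vecMul_hurwitzBlock_eq_zero_iff hf hU, ← comp_neg_X_eq_self_iff]

lemma det_hurwitzBlock_succ [CommRing R] {k : ℕ} {f : R[X]} (hf : f.natDegree ≤ k + 1) :
    (hurwitzBlock (k + 1) f).det = f.coeff (k + 1) * (hurwitzBlock k f).det := by
  have hminor : (hurwitzBlock (k + 1) f).submatrix (Fin.succAbove 0) Fin.succ =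
      hurwitzBlock k f := by
    ext i j
    rw [submatrix_apply, Fin.zero_succAbove, hurwitzBlock, hurwitzBlock]
    have hidx : k + 1 + (i.succ : ℕ) - 2 * j.succ = k + i - 2 * j := by
      rw [Fin.val_succ, Fin.val_succ]
      omega
    rw [hidx]
    refine if_congr ?_ rfl rfl
    rw [Fin.val_succ, Fin.val_succ]
    omega
  rw [det_succ_column_zero, Finset.sum_eq_single 0, hminor]
  · simp [hurwitzBlock]
  · intro i _ hi
    have hi' : 0 < (i : ℕ) := Fin.pos_iff_ne_zero.2 hi
    have hentry : hurwitzBlock (k + 1) f i 0 = 0 := by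
      simpa [hurwitzBlock] using coeff_eq_zero_of_natDegree_lt (by omega)
    rw [hentry, mul_zero, zero_mul]
  · simp

lemma continuous_det_hurwitzBlock [CommRing R] [TopologicalSpace R] [IsTopologicalRing R]
    {Y : Type*} [TopologicalSpace Y] {F : Y → R[X]}
    (hF : ∀ d, Continuous fun y => (F y).coeff d) (k : ℕ) :
    Continuous fun y => (hurwitzBlock k (F y)).det := by
  refine Continuous.matrix_det (continuous_matrix fun i j => ?_)
  simp only [hurwitzBlock]
  split_ifs
  · exact hF _
  · exact continuous_const

end HurwitzBlock

/-- A Hurwitz polynomial: all complex roots lie in the open left half-plane. It expresses the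
stability of a matrix through its characteristic polynomial. The sign of the leading coefficient is
left free; nonzero constants qualify, `0` does not. -/
def IsHurwitz (f : ℝ[X]) : Prop := ∀ z : ℂ, aeval z f = 0 → z.re < 0

lemma isHurwitzStable_iff {n : ℕ} {A : Matrix (Fin n) (Fin n) ℝ} :
    IsHurwitzStable A ↔ IsHurwitz A.charpoly := by
  simp only [IsHurwitzStable, IsHurwitz, IsRoot.def, eval_map_algebraMap]

namespace IsHurwitz

variable {f g : ℝ[X]}

lemma mul (hf : IsHurwitz f) (hg : IsHurwitz g) : IsHurwitz (f * g) := by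
  intro z hz
  rw [map_mul, mul_eq_zero] at hz
  exact hz.elim (hf z) (hg z)

lemma of_dvd (hf : IsHurwitz f) (hgf : g ∣ f) : IsHurwitz g :=
  fun z hz => hf z (aeval_eq_zero_of_dvd_aeval_eq_zero hgf hz)

lemma quadratic {a b c : ℝ} (ha : 0 ≤ a) (hb : 0 ≤ b) (hc : 0 < c) (hab : b = 0 → a = 0) :
    IsHurwitz (C a * X ^ 2 + C b * X + C c) := by
  intro z hz
  have hre : a * (z.re * z.re - z.im * z.im) + b * z.re + c = 0 := by
    simpa [sq] using congrArg Complex.re hz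
  have him : a * (z.re * z.im + z.im * z.re) + b * z.im = 0 := by
    simpa [sq] using congrArg Complex.im hz
  by_contra! hz0
  have hfactor : z.im * (2 * (a * z.re) + b) = 0 := by linarith
  have haz : 0 ≤ a * z.re := mul_nonneg ha hz0
  rcases mul_eq_zero.1 hfactor with him0 | hsum
  · rw [him0] at hre
    linarith [mul_nonneg haz hz0, mul_nonneg hb hz0]
  · have hb0 : b = 0 := by linarith
    rw [hab hb0, hb0] at hre
    linarith

lemma coeff_zero_pos (hf : IsHurwitz f) (hlc : 0 < f.leadingCoeff) : 0 < f.coeff 0 := by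
  rw [coeff_zero_eq_eval_zero]
  refine zero_lt_eval_of_roots_lt_of_leadingCoeff_nonneg (fun x hx => ?_) hlc.le
  have hroot : aeval (x : ℂ) f = 0 := by
    rw [← Complex.coe_algebraMap, aeval_algebraMap_apply_eq_algebraMap_eval, hx.eq_zero, map_zero]
  exact hf x hroot

lemma isCoprime_comp_neg_X (hf : IsHurwitz f) : IsCoprime (f.comp (-X)) f := by
  rw [isCoprime_iff_aeval_ne_zero_of_isAlgClosed ℝ ℂ]
  intro z
  by_contra! h
  have hz : z.re < 0 := hf z h.2
  have hnegz : (-z).re < 0 := hf (-z) (by simpa [aeval_comp] using h.1)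
  rw [Complex.neg_re] at hnegz
  linarith

lemma det_hurwitzBlock_ne_zero {k : ℕ} (hf : IsHurwitz f) (hk : k ≤ f.natDegree)
    (hk' : f.natDegree ≤ k + 1) : (hurwitzBlock k f).det ≠ 0 := by
  rw [Ne, det_hurwitzBlock_eq_zero_iff hk']
  rintro ⟨U, hU0, hU, heven⟩
  have hdvd : f.comp (-X) ∣ U := by
    refine hf.isCoprime_comp_neg_X.dvd_of_dvd_mul_left ?_
    rw [← heven, mul_comp]
    exact dvd_mul_right _ _
  have hle : f.natDegree ≤ U.natDegree := by
    simpa [natDegree_comp] using natDegree_le_of_dvd hdvd hU0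
  have hlt : U.natDegree < k := (natDegree_lt_iff_degree_lt hU0).2 hU
  omega

lemma exists_factor_degree_lowering_path (hf : IsHurwitz f) (hdeg : f.natDegree ≠ 0) :
    ∃ p r : ℝ[X], p + r ∣ f ∧ p.Monic ∧ r.natDegree + 1 = p.natDegree ∧ 0 < r.leadingCoeff ∧
      ∀ t : ℝ, 0 ≤ t → IsHurwitz (C t * p + r) := by
  obtain ⟨z, hz⟩ := IsAlgClosed.exists_aeval_eq_zero ℂ f
    (fun h => hdeg (natDegree_eq_zero_iff_degree_le_zero.2 h.le))
  have hre : z.re < 0 := hf z hz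
  by_cases him : z.im = 0
  · have hroot : f.IsRoot z.re := by
      have hzre : z = algebraMap ℝ ℂ z.re := Complex.ext rfl him
      rw [hzre, aeval_algebraMap_apply_eq_algebraMap_eval] at hz
      simpa using hz
    refine ⟨X, C (-z.re), ?_, monic_X, ?_, ?_, fun t ht => ?_⟩
    · rwa [C_neg, ← sub_eq_add_neg, dvd_iff_isRoot]
    · rw [natDegree_C, natDegree_X]
    · rw [leadingCoeff_C]
      exact neg_pos.2 hre
    · simpa using quadratic le_rfl ht (neg_pos.2 hre) fun _ => rfl
  · have hb : 0 < -(2 * z.re) := by linarith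
    have hc : 0 < ‖z‖ ^ 2 := by
      have hz0 : z ≠ 0 := fun h => him (by rw [h, Complex.zero_im])
      positivity
    refine ⟨X ^ 2, C (-(2 * z.re)) * X + C (‖z‖ ^ 2), ?_, monic_X_pow 2, ?_, ?_, fun t ht => ?_⟩
    · rw [C_neg, neg_mul, ← add_assoc, ← sub_eq_add_neg]
      exact f.quadratic_dvd_of_aeval_eq_zero_im_ne_zero hz him
    · rw [natDegree_linear hb.ne', natDegree_X_pow]
    · rwa [leadingCoeff_linear hb.ne']
    · rw [← add_assoc]
      exact quadratic ht hb.le hc fun h => absurd h hb.ne'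

lemma exists_degree_lowering_path (hf : IsHurwitz f) (hlc : 0 < f.leadingCoeff)
    (hdeg : f.natDegree ≠ 0) :
    ∃ u v : ℝ[X], u + v = f ∧ u.natDegree = f.natDegree ∧ v.natDegree + 1 = f.natDegree ∧
      0 < v.leadingCoeff ∧ ∀ t : ℝ, 0 ≤ t → IsHurwitz (C t * u + v) := by
  obtain ⟨p, r, ⟨g, rfl⟩, hp, hr, hrlc, hpath⟩ := hf.exists_factor_degree_lowering_path hdeg
  have hg0 : g ≠ 0 := right_ne_zero_of_mul (leadingCoeff_ne_zero.1 hlc.ne')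
  have hr0 : r ≠ 0 := leadingCoeff_ne_zero.1 hrlc.ne'
  have hrp : r.degree < p.degree := degree_lt_degree (by omega)
  have hpr : (p + r).Monic := hp.add_of_left hrp
  have hprdeg : (p + r).natDegree = p.natDegree := natDegree_add_eq_left_of_degree_lt hrp
  have hg : IsHurwitz g := hf.of_dvd (dvd_mul_left g _)
  rw [leadingCoeff_mul, hpr.leadingCoeff, one_mul] at hlc
  rw [hpr.natDegree_mul' hg0, hprdeg]
  refine ⟨p * g, r * g, (add_mul p r g).symm, hp.natDegree_mul' hg0, ?_, ?_, fun t ht => ?_⟩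
  · rw [natDegree_mul hr0 hg0]
    omega
  · rw [leadingCoeff_mul]
    exact mul_pos hrlc hlc
  · rw [← mul_assoc, ← add_mul]
    exact (hpath t ht).mul hg

theorem det_hurwitzBlock_pos {k : ℕ} (hf : IsHurwitz f) (hlc : 0 < f.leadingCoeff)
    (hk : k ≤ f.natDegree) (hk' : f.natDegree ≤ k + 1) : 0 < (hurwitzBlock k f).det := by
  induction k generalizing f with
  | zero => simp
  | succ k ih =>
    have pos_of_natDegree_eq {g : ℝ[X]} (hg : IsHurwitz g) (hlc : 0 < g.leadingCoeff)
        (hdeg : g.natDegree = k + 1) : 0 < (hurwitzBlock (k + 1) g).det := by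
      rw [det_hurwitzBlock_succ hdeg.le, ← hdeg, coeff_natDegree]
      exact mul_pos hlc (ih hg hlc (by omega) hdeg.le)
    rcases hk.eq_or_lt with hdeg | hdeg
    · exact pos_of_natDegree_eq hf hlc hdeg.symm
    obtain ⟨u, v, rfl, hu, hv, hvlc, hpath⟩ := hf.exists_degree_lowering_path hlc (by omega)
    have hne : ∀ t ∈ Set.Icc (0 : ℝ) 1, (hurwitzBlock (k + 1) (C t * u + v)).det ≠ 0 := by
      rintro t ⟨ht, -⟩
      have hdegt : (C t * u + v).natDegree = v.natDegree ∨
          (C t * u + v).natDegree = (u + v).natDegree := by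
        rcases ht.eq_or_lt with rfl | ht
        · simp
        · right
          rw [natDegree_add_eq_left_of_natDegree_lt, natDegree_C_mul ht.ne', hu]
          rw [natDegree_C_mul ht.ne']
          omega
      exact (hpath t ht).det_hurwitzBlock_ne_zero (by omega) (by omega)
    have hcont : Continuous fun t : ℝ => (hurwitzBlock (k + 1) (C t * u + v)).det := by
      refine continuous_det_hurwitzBlock (fun d => ?_) _
      simp only [coeff_add, coeff_C_mul]
      fun_prop
    have hzero : 0 < (hurwitzBlock (k + 1) (C 0 * u + v)).det := by
      have hv' : IsHurwitz v := by simpa using hpath 0 le_rfl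
      simpa using pos_of_natDegree_eq hv' hvlc (by omega)
    simpa using isPreconnected_Icc.lt_of_ne hcont.continuousOn hne ⟨0, by simp, hzero⟩
      (Set.right_mem_Icc.2 zero_le_one)

end IsHurwitz

lemma det_hurwitzBlock_eq_zero_of_imaginary_root {k : ℕ} {f : ℝ[X]} (hf0 : f ≠ 0)
    (hf : f.natDegree ≤ k + 1) {z : ℂ} (hz : aeval z f = 0) (hre : z.re = 0) (him : z.im ≠ 0) :
    (hurwitzBlock k f).det = 0 := by
  obtain ⟨h, rfl⟩ : X ^ 2 + C (‖z‖ ^ 2) ∣ f := by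
    simpa [hre] using f.quadratic_dvd_of_aeval_eq_zero_im_ne_zero hz him
  have hh0 : h ≠ 0 := right_ne_zero_of_mul hf0
  have hneg0 : h.comp (-X) ≠ 0 := comp_neg_X_eq_zero_iff.not.2 hh0
  rw [natDegree_mul (left_ne_zero_of_mul hf0) hh0, natDegree_X_pow_add_C] at hf
  refine (det_hurwitzBlock_eq_zero_iff ?_).2 ⟨h.comp (-X), hneg0, ?_, ?_⟩
  · rwa [natDegree_mul (left_ne_zero_of_mul hf0) hh0, natDegree_X_pow_add_C]
  · rw [← natDegree_lt_iff_degree_lt hneg0, natDegree_comp, natDegree_neg, natDegree_X]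
    omega
  · rw [mul_comp, mul_comp, comp_neg_X_comp_neg_X, add_comp, X_pow_comp, C_comp, neg_sq]
    ring

lemma re_ne_zero_of_det_hurwitzBlock_ne_zero {k : ℕ} {f : ℝ[X]} (hf : f.natDegree ≤ k + 1)
    (hdet : (hurwitzBlock k f).det ≠ 0) (hcoeff : f.coeff 0 ≠ 0) {z : ℂ} (hz : aeval z f = 0) :
    z.re ≠ 0 := by
  intro hre
  have hf0 : f ≠ 0 := fun h => hcoeff (by rw [h, coeff_zero])
  by_cases him : z.im = 0
  · have hz0 : z = 0 := Complex.ext hre him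
    rw [hz0, ← coeff_zero_eq_aeval_zero'] at hz
    exact hcoeff (by simpa using hz)
  · exact hdet (det_hurwitzBlock_eq_zero_of_imaginary_root hf0 hf hz hre him)

section RootContinuity

variable {Y K : Type*} [TopologicalSpace Y] {n : ℕ}

lemma continuous_eval_of_continuous_coeff [Semiring K] [TopologicalSpace K]
    [IsTopologicalSemiring K] {F : Y → K[X]} (hF : ∀ d, Continuous fun y => (F y).coeff d)
    (hdeg : ∀ y, (F y).natDegree ≤ n) : Continuous fun p : Y × K => (F p.1).eval p.2 := by
  simp_rw [fun p : Y × K => eval_eq_sum_range' (Nat.lt_succ_of_le (hdeg p.1)) p.2]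
  exact continuous_finsetSum _ fun d _ =>
    ((hF d).comp continuous_fst).mul (continuous_snd.pow d)

lemma continuous_cauchyBound [NormedDivisionRing K] {F : Y → K[X]}
    (hF : ∀ d, Continuous fun y => (F y).coeff d) (hdeg : ∀ y, (F y).degree = n) :
    Continuous fun y => cauchyBound (F y) := by
  have hnat (y : Y) : (F y).natDegree = n := natDegree_eq_of_degree_eq_some (hdeg y)
  have hlc (y : Y) : ‖(F y).coeff n‖₊ ≠ 0 :=
    nnnorm_ne_zero_iff.2 (coeff_ne_zero_of_eq_degree (hdeg y))
  simp only [cauchyBound, leadingCoeff, hnat]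
  exact ((Continuous.finset_sup_apply fun d _ => (hF d).nnnorm).div (hF n).nnnorm hlc).add
    continuous_const

lemma le_norm_eval_of_forall_isRoot [NormedField K] {p : K[X]} (hp : p.Splits) {x : K} {r : ℝ}
    (hr : 0 ≤ r) (hroots : ∀ z, p.IsRoot z → r ≤ ‖x - z‖) :
    ‖p.leadingCoeff‖ * r ^ p.natDegree ≤ ‖p.eval x‖ := by
  have hprod : (p.roots.map fun _ => r).prod ≤ (p.roots.map fun z => ‖x - z‖).prod :=
    Multiset.prod_map_le_prod_map₀ _ _ (fun _ _ => hr) fun z hz => hroots z (isRoot_of_mem_roots hz)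
  have hnorm : ‖(p.roots.map fun z => x - z).prod‖ = (p.roots.map fun z => ‖x - z‖).prod := by
    simpa [Multiset.map_map, Function.comp_def] using
      map_multiset_prod (normHom : K →*₀ ℝ) (p.roots.map fun z => x - z)
  rw [Multiset.map_const', Multiset.prod_replicate, ← hp.natDegree_eq_card_roots] at hprod
  rw [hp.eval_eq_prod_roots, norm_mul, hnorm]
  gcongr

variable [NormedField K] {F : Y → K[X]} {U : Set K}

lemma isOpen_setOf_forall_isRoot_mem [ProperSpace K]
    (hF : ∀ d, Continuous fun y => (F y).coeff d) (hdeg : ∀ y, (F y).degree = n)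
    (hU : IsOpen U) : IsOpen {y | ∀ z, (F y).IsRoot z → z ∈ U} := by
  rw [isOpen_iff_eventually]
  intro y₀ hy₀
  have hne (y : Y) : F y ≠ 0 := degree_ne_bot.1 (by rw [hdeg y]; exact WithBot.coe_ne_bot)
  have hcont := continuous_eval_of_continuous_coeff hF fun y =>
    natDegree_le_of_degree_le (hdeg y).le
  set r : NNReal := cauchyBound (F y₀) + 1
  have hbound : ∀ᶠ y in nhds y₀, cauchyBound (F y) < r :=
    (continuous_cauchyBound hF hdeg).continuousAt.eventually_lt_const (lt_add_one _)
  have hK : IsCompact (Metric.closedBall (0 : K) r \ U) := (isCompact_closedBall 0 _).diff hU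
  have havoid : ∀ᶠ y in nhds y₀, ∀ z ∈ Metric.closedBall (0 : K) r \ U, (F y).eval z ≠ 0 :=
    hK.eventually_forall_of_forall_eventually fun z hz =>
      hcont.continuousAt.eventually_ne fun h => hz.2 (hy₀ z h)
  filter_upwards [hbound, havoid] with y hy hyK z hz
  by_contra hzU
  refine hyK z ⟨?_, hzU⟩ hz
  rw [mem_closedBall_zero_iff]
  exact_mod_cast ((hz.norm_lt_cauchyBound (hne y)).trans hy).le

lemma isOpen_setOf_exists_isRoot_mem [IsAlgClosed K]
    (hF : ∀ d, Continuous fun y => (F y).coeff d) (hdeg : ∀ y, (F y).degree = n)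
    (hU : IsOpen U) : IsOpen {y | ∃ z ∈ U, (F y).IsRoot z} := by
  rw [isOpen_iff_eventually]
  rintro y₀ ⟨z, hzU, hz⟩
  obtain ⟨r, hr, hball⟩ := Metric.isOpen_iff.1 hU z hzU
  have hnat (y : Y) : (F y).natDegree = n := natDegree_eq_of_degree_eq_some (hdeg y)
  have hlc : (F y₀).coeff n ≠ 0 := coeff_ne_zero_of_eq_degree (hdeg y₀)
  have heval : Continuous fun y => (F y).eval z :=
    (continuous_eval_of_continuous_coeff hF fun y => (hnat y).le).comp (Continuous.prodMk_left z)
  have hsmall : ∀ᶠ y in nhds y₀, ‖(F y).eval z‖ < ‖(F y).coeff n‖ * r ^ n := by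
    refine heval.norm.continuousAt.eventually_lt
      ((hF n).norm.mul continuous_const).continuousAt ?_
    rw [hz.eq_zero, norm_zero]
    positivity
  filter_upwards [hsmall] with y hy
  by_contra! hfar
  refine hy.not_ge ?_
  rw [← hnat y]
  refine le_norm_eval_of_forall_isRoot (IsAlgClosed.splits _) hr.le fun w hw => ?_
  by_contra! hwz
  exact hfar w (hball (by rwa [mem_ball_iff_norm'])) hw

end RootContinuity

theorem forall_isHurwitz_of_isPreconnected {Y : Type*} [TopologicalSpace Y] {n : ℕ} {s : Set Y}
    (hs : IsPreconnected s) {F : Y → ℝ[X]} (hF : ∀ d, Continuous fun y => (F y).coeff d)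
    (hdeg : ∀ y, (F y).degree = n)
    (himag : ∀ y ∈ s, ∀ z : ℂ, aeval z (F y) = 0 → z.re ≠ 0)
    (hex : ∃ y ∈ s, IsHurwitz (F y)) : ∀ y ∈ s, IsHurwitz (F y) := by
  have hFc (d : ℕ) : Continuous fun y => ((F y).map (algebraMap ℝ ℂ)).coeff d := by
    simp only [coeff_map]
    exact Complex.continuous_ofReal.comp (hF d)
  have hdegc (y : Y) : ((F y).map (algebraMap ℝ ℂ)).degree = n := by rw [degree_map, hdeg]
  have hstable : IsOpen {y | IsHurwitz (F y)} := by
    simpa [IsHurwitz, eval_map_algebraMap] using isOpen_setOf_forall_isRoot_mem hFc hdegc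
      (isOpen_lt Complex.continuous_re continuous_const : IsOpen {z : ℂ | z.re < 0})
  have hunstable : IsOpen {y | ∃ z : ℂ, 0 < z.re ∧ aeval z (F y) = 0} := by
    simpa [eval_map_algebraMap] using isOpen_setOf_exists_isRoot_mem hFc hdegc
      (isOpen_lt continuous_const Complex.continuous_re : IsOpen {z : ℂ | 0 < z.re})
  have hdisj : Disjoint {y | IsHurwitz (F y)} {y | ∃ z : ℂ, 0 < z.re ∧ aeval z (F y) = 0} := by
    rw [Set.disjoint_left]
    rintro y hy ⟨z, hzre, hz⟩
    exact (hy z hz).not_gt hzre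
  have hcover : s ⊆ {y | IsHurwitz (F y)} ∪ {y | ∃ z : ℂ, 0 < z.re ∧ aeval z (F y) = 0} := by
    intro y hy
    refine or_iff_not_imp_right.2 fun hright z hz => ?_
    exact lt_of_le_of_ne (not_lt.1 fun hpos => hright ⟨z, hpos, hz⟩) (himag y hy z hz)
  exact hs.subset_left_of_subset_union hstable hunstable hdisj hcover hex

lemma continuous_charpoly_coeff {ι R : Type*} [Fintype ι] [DecidableEq ι] [CommRing R]
    [TopologicalSpace R] [IsTopologicalRing R] (d : ℕ) :
    Continuous fun A : Matrix ι ι R => A.charpoly.coeff d := by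
  have huniv (A : Matrix ι ι R) : A.charpoly.coeff d =
      MvPolynomial.eval (fun ij : ι × ι => A ij.1 ij.2) ((charpoly.univ R ι).coeff d) :=
    (charpoly.univ_coeff_eval₂Hom ι (RingHom.id R) (fun ij : ι × ι => A ij.1 ij.2) d).symm
  simp only [huniv]
  exact (MvPolynomial.continuous_eval _).comp (by fun_prop)

theorem polytope_hurwitz_stable_iff_general {n : ℕ} {S : Set (Matrix (Fin n) (Fin n) ℝ)}
    (hS : IsPreconnected S) (hex : ∃ B ∈ S, IsHurwitzStable B) :
    (∀ B ∈ S, IsHurwitzStable B) ↔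
      ∀ B ∈ S, 0 < leadingPrincipalMinor (hurwitzMatrix n B.charpoly) (n - 1) (Nat.sub_le n 1) ∧
        0 < B.charpoly.coeff 0 := by
  have hdeg (B : Matrix (Fin n) (Fin n) ℝ) : B.charpoly.natDegree = n := by
    simp [charpoly_natDegree_eq_dim]
  have hlc (B : Matrix (Fin n) (Fin n) ℝ) : 0 < B.charpoly.leadingCoeff := by
    simp [B.charpoly_monic.leadingCoeff]
  simp only [isHurwitzStable_iff, leadingPrincipalMinor_hurwitzMatrix (hdeg _).le] at hex ⊢
  constructor
  · intro h B hB
    exact ⟨(h B hB).det_hurwitzBlock_pos (hlc B) (by grind) (by grind),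
      (h B hB).coeff_zero_pos (hlc B)⟩
  · intro h
    refine forall_isHurwitz_of_isPreconnected hS (n := n) continuous_charpoly_coeff
      (fun B => by simp [charpoly_degree_eq_dim]) (fun B hB z hz => ?_) hex
    exact re_ne_zero_of_det_hurwitzBlock_ne_zero (by grind) (h B hB).1.ne' (h B hB).2.ne' hz

/-- The polytope of matrices `{∑ qₖ Aₖ : q ∈ Sₘ}` contains a Hurwitz stable matrix.
Then every matrix in the polytope is Hurwitz stable iff `Δ_{n-1}(q) > 0` and `a₀(q) > 0`
for all `q` in the standard simplex. -/
theorem polytope_hurwitz_stable_iff (n m : ℕ) (A : Fin m → Matrix (Fin n) (Fin n) ℝ)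
    (hex : ∃ q ∈ stdSimplex ℝ (Fin m), IsHurwitzStable (∑ k, q k • A k)) :
    (∀ q ∈ stdSimplex ℝ (Fin m), IsHurwitzStable (∑ k, q k • A k)) ↔
      (∀ q ∈ stdSimplex ℝ (Fin m),
        0 < leadingPrincipalMinor (hurwitzMatrix n (∑ k, q k • A k).charpoly) (n - 1)
              (Nat.sub_le n 1) ∧
        0 < ((∑ k, q k • A k).charpoly).coeff 0) := by
  simpa only [Set.forall_mem_image, Set.exists_mem_image] using
    polytope_hurwitz_stable_iff_general
      ((convex_stdSimplex ℝ (Fin m)).isPreconnected.image (fun q => ∑ k, q k • A k) (by fun_prop))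
      (Set.exists_mem_image.2 hex)
end

section
/- Let $A_1,\ldots,A_m$ be real $n\times n$ matrices. For $q \in S_m$ write $f_{A(q)}(s) = \det(sI_n - \sum_k q_k A_k) = s^n + a_{n-1}(q)s^{n-1} + \cdots + a_0(q)$, and let $\Delta_{n-1}(q)$ be the $(n-1)$-th leading principal minor of the Hurwitz matrix of $f_{A(q)}$. If there exists $q^* \in S_m$ such that $\sum_k q^*_k A_k$ is Hurwitz stable, and moreover $\Delta_{n-1}(q) > 0$ and $a_0(q) > 0$ for all $q \in S_m$, then for every $q \in S_m$ the matrix $\sum_{k=1}^m q_k A_k$ is Hurwitz stable. -/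
open Polynomial Matrix

/-!
The parameter set is connected, so it suffices that stability is an open and relatively closed
condition. The spectrum of a complex matrix depends continuously on it, in both senses of
hemicontinuity: upper hemicontinuity makes "all eigenvalues in the open left half-plane" an open
condition, and lower hemicontinuity makes "all eigenvalues in the closed left half-plane" a closed
one. The two agree where there is no eigenvalue on the imaginary axis. The eigenvalue `0` is
excluded by `a₀ ≠ 0`. An eigenvalue `iω ≠ 0` makes `X² + ω²` divide the characteristic polynomial,
and then the powers of `-ω²` form a vector in the kernel of the leading `(n - 1) × (n - 1)` block of
the Hurwitz matrix, contradicting `Δ_{n-1} ≠ 0`.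
-/

open Topology

section HurwitzMinor

lemma coeff_toLaurent_natCast {R : Type*} [Semiring R] (f : R[X]) (k : ℕ) :
    (toLaurent f).coeff (k : ℤ) = f.coeff k :=
  Finsupp.mapDomain_apply Nat.cast_injective _ k

lemma coeff_toLaurent_of_neg {R : Type*} [Semiring R] (f : R[X]) {e : ℤ} (he : e < 0) :
    (toLaurent f).coeff e = 0 :=
  Finsupp.mapDomain_of_notMem_range _ _ (by rintro ⟨k, rfl⟩; exact he.not_ge (Int.natCast_nonneg k))

lemma coeff_toLaurent_of_natDegree_lt {R : Type*} [Semiring R] {f : R[X]} {e : ℤ}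
    (he : (f.natDegree : ℤ) < e) : (toLaurent f).coeff e = 0 := by
  lift e to ℕ using by omega
  rw [coeff_toLaurent_natCast]
  exact coeff_eq_zero_of_natDegree_lt (by omega)

lemma coeff_toLaurent_X_pow_add_C_mul {R : Type*} [Semiring R] (k : ℕ) (w : R) (g : R[X]) (e : ℤ) :
    (toLaurent ((X ^ k + C w) * g)).coeff e =
      (toLaurent g).coeff (e - k) + w * (toLaurent g).coeff e := by
  rw [map_mul, map_add, toLaurent_X_pow, toLaurent_C, add_mul, AddMonoidAlgebra.coeff_add,
    Finsupp.add_apply, LaurentPolynomial.T, ← LaurentPolynomial.single_eq_C,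
    AddMonoidAlgebra.coeff_single_mul_apply, AddMonoidAlgebra.coeff_single_mul_apply, one_mul,
    neg_add_eq_sub, neg_zero, zero_add]

lemma hurwitzMatrix_apply {n : ℕ} {f : ℝ[X]} (hf : f.natDegree ≤ n) (i j : Fin n) :
    hurwitzMatrix n f i j = (toLaurent f).coeff ((n : ℤ) - 2 * ((j : ℕ) + 1) + ((i : ℕ) + 1)) := by
  simp only [hurwitzMatrix]
  generalize (n : ℤ) - 2 * ((j : ℕ) + 1) + ((i : ℕ) + 1) = e
  split_ifs with h
  · lift e to ℕ using h.1
    rw [coeff_toLaurent_natCast, Int.toNat_natCast]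
  · rcases lt_or_ge e 0 with he | he
    · rw [coeff_toLaurent_of_neg f he]
    · rw [coeff_toLaurent_of_natDegree_lt (by omega)]

lemma sum_range_succ_add_mul_mul_neg_pow {R : Type*} [CommRing R] (c : ℕ → R) (w : R) (N : ℕ) :
    ∑ j ∈ Finset.range N, (c (j + 1) + w * c j) * (-w) ^ (N - 1 - j) =
      c N - c 0 * (-w) ^ N := by
  have hterm : ∀ j ∈ Finset.range N, (c (j + 1) + w * c j) * (-w) ^ (N - 1 - j) =
      c (j + 1) * (-w) ^ (N - (j + 1)) - c j * (-w) ^ (N - j) := by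
    intro j hj
    have hN : N - j = (N - 1 - j) + 1 := by grind
    rw [hN, Nat.sub_sub, add_comm 1 j]
    ring
  rw [Finset.sum_congr rfl hterm, Finset.sum_range_sub fun j => c j * (-w) ^ (N - j)]
  simp

/-- If `f = (X² + w) g`, each row of the Hurwitz matrix of `f` telescopes against the powers of
`-w`, and for the first `n - 1` rows both boundary coefficients of `g` are out of range. -/
lemma hurwitzMatrix_submatrix_mulVec_neg_pow {n : ℕ} (w : ℝ) {g : ℝ[X]} (hg : g.natDegree + 2 ≤ n) :
    (hurwitzMatrix n ((X ^ 2 + C w) * g)).submatrix (Fin.castLE (Nat.sub_le n 1))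
      (Fin.castLE (Nat.sub_le n 1)) *ᵥ (fun j => (-w) ^ (n - 1 - 1 - (j : ℕ))) = 0 := by
  have hdeg : ((X ^ 2 + C w) * g).natDegree ≤ n :=
    natDegree_mul_le.trans (by rw [natDegree_X_pow_add_C]; omega)
  funext i
  set c : ℕ → ℝ := fun j => (toLaurent g).coeff ((n : ℤ) - 1 - 2 * j + (i : ℕ)) with hc
  have hentry (j : Fin (n - 1)) : hurwitzMatrix n ((X ^ 2 + C w) * g)
      (Fin.castLE (Nat.sub_le n 1) i) (Fin.castLE (Nat.sub_le n 1) j) = c (j + 1) + w * c j := by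
    rw [hurwitzMatrix_apply hdeg, coeff_toLaurent_X_pow_add_C_mul]
    simp only [hc, Fin.val_castLE]
    push_cast
    ring_nf
  have hfirst : c 0 = 0 := coeff_toLaurent_of_natDegree_lt (by push_cast; omega)
  have hlast : c (n - 1) = 0 := coeff_toLaurent_of_neg g (by omega)
  simp only [mulVec, dotProduct, submatrix_apply, hentry, Pi.zero_apply]
  rw [Fin.sum_univ_eq_sum_range fun j => (c (j + 1) + w * c j) * (-w) ^ (n - 1 - 1 - j),
    sum_range_succ_add_mul_mul_neg_pow, hfirst, hlast, zero_mul, sub_zero]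

lemma leadingPrincipalMinor_hurwitzMatrix_eq_zero {n : ℕ} {f : ℝ[X]} (hf₀ : f ≠ 0)
    (hf : f.natDegree ≤ n) {w : ℝ} (hdvd : X ^ 2 + C w ∣ f) :
    leadingPrincipalMinor (hurwitzMatrix n f) (n - 1) (Nat.sub_le n 1) = 0 := by
  obtain ⟨g, rfl⟩ := hdvd
  have hg : g.natDegree + 2 ≤ n := by
    rw [natDegree_mul (left_ne_zero_of_mul hf₀) (right_ne_zero_of_mul hf₀),
      natDegree_X_pow_add_C] at hf
    omega
  refine exists_mulVec_eq_zero_iff.mp ⟨_, fun h => ?_, hurwitzMatrix_submatrix_mulVec_neg_pow w hg⟩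
  simpa using congrFun h ⟨n - 1 - 1, by omega⟩

lemma re_ne_zero_of_leadingPrincipalMinor_hurwitzMatrix_ne_zero {n : ℕ} {f : ℝ[X]}
    (hf : f.natDegree ≤ n)
    (hminor : leadingPrincipalMinor (hurwitzMatrix n f) (n - 1) (Nat.sub_le n 1) ≠ 0)
    (hcoeff : f.coeff 0 ≠ 0) {z : ℂ} (hz : aeval z f = 0) : z.re ≠ 0 := by
  intro hre
  by_cases him : z.im = 0
  · obtain rfl : z = 0 := Complex.ext hre him
    rw [← coeff_zero_eq_aeval_zero', map_eq_zero] at hz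
    exact hcoeff hz
  · have hdvd := quadratic_dvd_of_aeval_eq_zero_im_ne_zero f hz him
    rw [hre, mul_zero, C_0, zero_mul, sub_zero] at hdvd
    have hf₀ : f ≠ 0 := fun h => hcoeff (by rw [h, coeff_zero])
    exact hminor (leadingPrincipalMinor_hurwitzMatrix_eq_zero hf₀ hf hdvd)

end HurwitzMinor

section Spectrum

lemma pow_natDegree_le_norm_eval {K : Type*} [NormedField K] {p : K[X]} (hp : p.Monic)
    (hsplits : p.Splits) {a : K} {r : ℝ} (hr : 0 ≤ r) (hroots : ∀ z ∈ p.roots, r ≤ ‖a - z‖) :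
    r ^ p.natDegree ≤ ‖p.eval a‖ := by
  have hnorm : ‖p.eval a‖ = (p.roots.map fun z => ‖a - z‖).prod := by
    rw [hsplits.eval_eq_prod_roots_of_monic hp]
    exact (p.roots.prod_hom' (normHom : K →*₀ ℝ) fun z => a - z).symm
  calc r ^ p.natDegree
      = (p.roots.map fun _ => r).prod := by simp [hsplits.natDegree_eq_card_roots]
    _ ≤ (p.roots.map fun z => ‖a - z‖).prod :=
        Multiset.prod_map_le_prod_map₀ _ _ (fun _ _ => hr) hroots
    _ = ‖p.eval a‖ := hnorm.symm

variable {ι : Type*} [Fintype ι] [DecidableEq ι]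

lemma mem_spectrum_map_iff_aeval_charpoly {R L : Type*} [CommRing R] [Field L] [Algebra R L]
    {A : Matrix ι ι R} {z : L} :
    z ∈ spectrum L (A.map (algebraMap R L)) ↔ aeval z A.charpoly = 0 := by
  rw [mem_spectrum_iff_isRoot_charpoly, charpoly_map, IsRoot.def, eval_map_algebraMap]

lemma continuous_eval_charpoly {R : Type*} [CommRing R] [TopologicalSpace R] [IsTopologicalRing R]
    (a : R) : Continuous fun B : Matrix ι ι R => B.charpoly.eval a := by
  simp only [eval_charpoly]
  exact (continuous_const.sub continuous_id).matrix_det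

variable {K : Type*} [NormedField K]

/-- An eigenvalue `a` of `A` makes `det (a - B)` small for `B` near `A`. As `det (a - B)` is the
product of the differences `a - b` over the eigenvalues `b` of `B`, one of them must be small. -/
lemma lowerHemicontinuous_matrix_spectrum [IsAlgClosed K] :
    LowerHemicontinuous (spectrum K : Matrix ι ι K → Set K) := by
  refine lowerHemicontinuous_iff_isOpen_inter_nonempty.mpr fun u hu =>
    isOpen_iff_mem_nhds.mpr ?_
  rintro A ⟨a, ha, hau⟩
  obtain ⟨r, hr, hball⟩ := Metric.isOpen_iff.mp hu a hau
  have hsmall : ∀ᶠ B : Matrix ι ι K in 𝓝 A, ‖B.charpoly.eval a‖ < r ^ Fintype.card ι := by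
    refine (continuous_eval_charpoly a).norm.continuousAt.eventually_lt_const ?_
    simpa [(mem_spectrum_iff_isRoot_charpoly.mp ha).eq_zero] using pow_pos hr (Fintype.card ι)
  filter_upwards [hsmall] with B hB
  by_contra hempty
  refine hB.not_ge ?_
  rw [← B.charpoly_natDegree_eq_dim]
  refine pow_natDegree_le_norm_eval B.charpoly_monic (IsAlgClosed.splits _) hr.le fun z hz => ?_
  by_contra! hlt
  exact hempty ⟨z, mem_spectrum_iff_isRoot_charpoly.mpr (isRoot_of_mem_roots hz),
    hball (by rwa [mem_ball_iff_norm'])⟩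

open scoped Matrix.Norms.Operator in
lemma upperHemicontinuous_matrix_spectrum [ProperSpace K] :
    UpperHemicontinuous (spectrum K : Matrix ι ι K → Set K) :=
  -- instance search does not unfold the uniformity of the operator norm to the product one
  have : @CompleteSpace (Matrix ι ι K) PseudoMetricSpace.toUniformSpace :=
    inferInstanceAs (CompleteSpace (ι → ι → K))
  upperHemicontinuous_spectrum K (Matrix ι ι K)

end Spectrum

section HurwitzStable

variable {n : ℕ}

lemma isHurwitzStable_iff_spectrum_subset {A : Matrix (Fin n) (Fin n) ℝ} :
    IsHurwitzStable A ↔ spectrum ℂ (A.map (algebraMap ℝ ℂ)) ⊆ {z | z.re < 0} := by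
  simp only [IsHurwitzStable, ← charpoly_map, ← mem_spectrum_iff_isRoot_charpoly, Set.subset_def,
    Set.mem_ofPred_eq]

lemma isOpen_setOf_isHurwitzStable :
    IsOpen {A : Matrix (Fin n) (Fin n) ℝ | IsHurwitzStable A} := by
  simp only [isHurwitzStable_iff_spectrum_subset]
  exact (upperHemicontinuous_iff_isOpen_preimage_Iic.mp upperHemicontinuous_matrix_spectrum _
    (isOpen_lt Complex.continuous_re continuous_const)).preimage
      (continuous_id.matrix_map (continuous_algebraMap ℝ ℂ))

lemma closure_setOf_isHurwitzStable_subset :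
    closure {A : Matrix (Fin n) (Fin n) ℝ | IsHurwitzStable A} ⊆
      {A | spectrum ℂ (A.map (algebraMap ℝ ℂ)) ⊆ {z | z.re ≤ 0}} := by
  refine closure_minimal (fun A hA => ?_) ?_
  · exact (isHurwitzStable_iff_spectrum_subset.mp hA).trans fun z (hz : z.re < 0) => hz.le
  · exact (lowerHemicontinuous_iff_isClosed_preimage_Iic.mp lowerHemicontinuous_matrix_spectrum _
      (isClosed_le Complex.continuous_re continuous_const)).preimage
      (continuous_id.matrix_map (continuous_algebraMap ℝ ℂ))

end HurwitzStable

theorem minors_pos_implies_polytope_stable_general {n : ℕ} {S : Set (Matrix (Fin n) (Fin n) ℝ)}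
    (hS : IsPreconnected S) (hex : ∃ A ∈ S, IsHurwitzStable A)
    (hne : ∀ A ∈ S,
      leadingPrincipalMinor (hurwitzMatrix n A.charpoly) (n - 1) (Nat.sub_le n 1) ≠ 0 ∧
      A.charpoly.coeff 0 ≠ 0) :
    ∀ A ∈ S, IsHurwitzStable A := by
  refine hS.subset_of_closure_inter_subset isOpen_setOf_isHurwitzStable hex ?_
  rintro A ⟨hcl, hA⟩
  refine isHurwitzStable_iff_spectrum_subset.mpr fun z hz => ?_
  have hdeg : A.charpoly.natDegree ≤ n := by rw [charpoly_natDegree_eq_dim, Fintype.card_fin]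
  have hre : z.re ≠ 0 := re_ne_zero_of_leadingPrincipalMinor_hurwitzMatrix_ne_zero hdeg
    (hne A hA).1 (hne A hA).2 (mem_spectrum_map_iff_aeval_charpoly.mp hz)
  exact (closure_setOf_isHurwitzStable_subset hcl hz).lt_of_ne hre

/-- If the polytope contains a Hurwitz stable matrix and `Δ_{n-1}(q) > 0`, `a₀(q) > 0`
for all `q` in the standard simplex, then every matrix in the polytope is Hurwitz stable. -/
theorem minors_pos_implies_polytope_stable (n m : ℕ) (A : Fin m → Matrix (Fin n) (Fin n) ℝ)
    (hex : ∃ q ∈ stdSimplex ℝ (Fin m), IsHurwitzStable (∑ k, q k • A k))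
    (hpos : ∀ q ∈ stdSimplex ℝ (Fin m),
      0 < leadingPrincipalMinor (hurwitzMatrix n (∑ k, q k • A k).charpoly) (n - 1)
            (Nat.sub_le n 1) ∧
      0 < ((∑ k, q k • A k).charpoly).coeff 0) :
    ∀ q ∈ stdSimplex ℝ (Fin m), IsHurwitzStable (∑ k, q k • A k) := by
  have hcont : Continuous fun q : Fin m → ℝ => ∑ k, q k • A k := by fun_prop
  exact Set.forall_mem_image.mp <| minors_pos_implies_polytope_stable_general
    ((convex_stdSimplex ℝ (Fin m)).isPreconnected.image _ hcont.continuousOn)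
    (Set.exists_mem_image.mpr hex)
    (Set.forall_mem_image.mpr fun q hq => ⟨(hpos q hq).1.ne', (hpos q hq).2.ne'⟩)
end

section
/- Let $A$ be a real $n\times n$ matrix ($n \ge 2$) with characteristic polynomial $f_A(s) = \det(sI_n - A)$, and let $\Delta_{n-1}$ denote the $(n-1)$-th leading principal minor of the Hurwitz matrix of $f_A$. If $A$ has a nonzero purely imaginary eigenvalue $i\omega$ (with $\omega \in \mathbb{R}$, $\omega \ne 0$), then $\Delta_{n-1} = 0$. -/
/-!
Write `f = g₀(X²) + X g₁(X²)`. If `f` vanishes at both `z` and `-z` with `z ≠ 0`, then `g₀` and `g₁`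
both vanish at `z²`. Moving one column to the right in the Hurwitz matrix lowers the coefficient
index by two, so the first `n - 1` entries of each of its first `n - 1` rows are the coefficients of
`g₀` or `g₁` in reversed order, up to padding by zeros. Hence the vector of powers of `z⁻²` lies in
the kernel of the leading `(n - 1) × (n - 1)` block.
-/

open Polynomial Matrix

lemma coeff_iterate_divX {R : Type*} [Semiring R] (r : ℕ) (f : R[X]) (k : ℕ) :
    (divX^[r] f).coeff k = f.coeff (k + r) := by
  induction r generalizing k with
  | zero => rfl
  | succ r ih => rw [Function.iterate_succ_apply', coeff_divX, ih, add_right_comm, add_assoc]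

section ParityPart

variable {R : Type*} [CommSemiring R]

/-- The part of `f` of the parity of `r`, as a polynomial in the square of the variable: the
coefficients of `parityPart 0 f` and `parityPart 1 f` are those of `f` of even and of odd index,
so that `f = g₀(X²) + X g₁(X²)`. For `r ≥ 2` the first `r` coefficients of `f` are discarded. -/
noncomputable def parityPart (r : ℕ) (f : R[X]) : R[X] :=
  contract 2 (divX^[r] f)

lemma coeff_parityPart (r : ℕ) (f : R[X]) (k : ℕ) :
    (parityPart r f).coeff k = f.coeff (2 * k + r) := by
  rw [parityPart, coeff_contract two_ne_zero, coeff_iterate_divX, mul_comm]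

lemma natDegree_parityPart_le (r : ℕ) (f : R[X]) :
    (parityPart r f).natDegree ≤ (f.natDegree - r) / 2 := by
  refine natDegree_le_iff_coeff_eq_zero.mpr fun k hk => ?_
  rw [coeff_parityPart]
  exact coeff_eq_zero_of_natDegree_lt (by omega)

lemma expand_parityPart_zero_add_X_mul (f : R[X]) :
    expand R 2 (parityPart 0 f) + X * expand R 2 (parityPart 1 f) = f := by
  ext k
  rcases k.even_or_odd' with ⟨l, rfl | rfl⟩
  · cases l with
    | zero => simp [coeff_expand, coeff_parityPart]
    | succ l =>
      have hodd : ¬ 2 ∣ 2 * l + 1 := by omega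
      simp [coeff_expand, coeff_parityPart, mul_add, coeff_X_mul, hodd]
  · have hodd : ¬ 2 ∣ 2 * l + 1 := by omega
    simp [coeff_expand, coeff_parityPart, coeff_X_mul, hodd]

lemma aeval_eq_aeval_parityPart_add {A : Type*} [Semiring A] [Algebra R A] (f : R[X]) (z : A) :
    aeval z f = aeval (z ^ 2) (parityPart 0 f) + z * aeval (z ^ 2) (parityPart 1 f) := by
  conv_lhs => rw [← expand_parityPart_zero_add_X_mul f]
  simp only [map_add, map_mul, aeval_X, expand_aeval]

lemma aeval_sq_parityPart_eq_zero {A : Type*} [CommRing A] [NoZeroDivisors A] [NeZero (2 : A)]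
    [Algebra R A] {f : R[X]} {z : A} (hz : z ≠ 0) (hpos : aeval z f = 0) (hneg : aeval (-z) f = 0)
    {r : ℕ} (hr : r < 2) : aeval (z ^ 2) (parityPart r f) = 0 := by
  rw [aeval_eq_aeval_parityPart_add] at hpos hneg
  rw [neg_sq] at hneg
  have heven : 2 * aeval (z ^ 2) (parityPart 0 f) = 0 := by linear_combination hpos + hneg
  have hodd : 2 * (z * aeval (z ^ 2) (parityPart 1 f)) = 0 := by linear_combination hpos - hneg
  interval_cases r
  · exact (mul_eq_zero_iff_left two_ne_zero).mp heven
  · exact (mul_eq_zero_iff_left hz).mp ((mul_eq_zero_iff_left two_ne_zero).mp hodd)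

end ParityPart

section HurwitzMatrix

variable {n : ℕ} {f : ℝ[X]}

/-- For `f` of degree at most `n`, the polynomial whose coefficients are the entries of row `i`
(`0`-based) of the Hurwitz matrix, the column index being the exponent. The row starts with the
coefficient of `f` of index `n + i - 1 = 2q + r`, where `r < 2`, and continues with those of index
`2(q - 1) + r`, …, `r`. -/
noncomputable def hurwitzRowPolynomial (n : ℕ) (f : ℝ[X]) (i : ℕ) : ℝ[X] :=
  reflect ((n + i - 1) / 2) (parityPart ((n + i - 1) % 2) f)

lemma natDegree_parityPart_le_of_natDegree_le (hf : f.natDegree ≤ n) (i : ℕ) :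
    (parityPart ((n + i - 1) % 2) f).natDegree ≤ (n + i - 1) / 2 :=
  (natDegree_parityPart_le _ f).trans (by omega)

lemma natDegree_hurwitzRowPolynomial_le (hf : f.natDegree ≤ n) (i : ℕ) :
    (hurwitzRowPolynomial n f i).natDegree ≤ (n + i - 1) / 2 :=
  natDegree_reflect_le.trans (max_le le_rfl (natDegree_parityPart_le_of_natDegree_le hf i))

lemma aeval_invOf_sq_hurwitzRowPolynomial_eq_zero {A : Type*} [CommRing A] [IsDomain A]
    [Algebra ℝ A] (hf : f.natDegree ≤ n) {z : A} [Invertible (z ^ 2)] (hpos : aeval z f = 0)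
    (hneg : aeval (-z) f = 0) (i : ℕ) :
    aeval (⅟(z ^ 2)) (hurwitzRowPolynomial n f i) = 0 := by
  have : CharZero A := charZero_of_injective_algebraMap (algebraMap ℝ A).injective
  have hz : z ≠ 0 := ne_zero_pow two_ne_zero (Invertible.ne_zero (z ^ 2))
  exact (eval₂_reflect_eq_zero_iff _ _ _ _ (natDegree_parityPart_le_of_natDegree_le hf i)).mpr
    (aeval_sq_parityPart_eq_zero hz hpos hneg (Nat.mod_lt _ two_pos))

lemma hurwitzMatrix_apply_eq_coeff (hf : f.natDegree ≤ n) (i j : Fin n) :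
    hurwitzMatrix n f i j = (hurwitzRowPolynomial n f i).coeff j := by
  have hcoeff {k : ℕ} (hk : n < k) : f.coeff k = 0 :=
    coeff_eq_zero_of_natDegree_lt (hf.trans_lt hk)
  rw [hurwitzRowPolynomial, coeff_reflect, coeff_parityPart, hurwitzMatrix]
  rcases le_or_gt (j : ℕ) ((n + i - 1) / 2) with hj | hj
  · rw [revAt_le hj]
    split_ifs with he
    · congr 1
      omega
    · exact (hcoeff (by omega)).symm
  · rw [revAt_eq_self_of_lt hj, if_neg (by omega), hcoeff (by omega)]

lemma hurwitzMatrix_submatrix_mulVec_pow {A : Type*} [Semiring A] [Algebra ℝ A] {k : ℕ}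
    (hkn : k ≤ n) (hnk : n ≤ k + 1) (hf : f.natDegree ≤ n) (x : A) (i : Fin k) :
    ((((hurwitzMatrix n f).submatrix (Fin.castLE hkn) (Fin.castLE hkn)).map (algebraMap ℝ A)) *ᵥ
        fun j => x ^ (j : ℕ)) i = aeval x (hurwitzRowPolynomial n f i) := by
  have hdeg : (hurwitzRowPolynomial n f i).natDegree < k :=
    (natDegree_hurwitzRowPolynomial_le hf i).trans_lt (by omega)
  rw [aeval_eq_sum_range' hdeg, ← Fin.sum_univ_eq_sum_range, mulVec, dotProduct]
  refine Finset.sum_congr rfl fun j _ => ?_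
  rw [map_apply, submatrix_apply, hurwitzMatrix_apply_eq_coeff hf, Algebra.smul_def]
  simp only [Fin.val_castLE]

theorem delta_eq_zero_of_imaginary_eigenvalue_general {k : ℕ} (hk : 0 < k) (hkn : k ≤ n)
    (hnk : n ≤ k + 1) (hf : f.natDegree ≤ n) {z : ℂ} (hz : z ≠ 0) (hpos : aeval z f = 0)
    (hneg : aeval (-z) f = 0) : leadingPrincipalMinor (hurwitzMatrix n f) k hkn = 0 := by
  have : Invertible (z ^ 2) := invertibleOfNonzero (pow_ne_zero 2 hz)
  rw [leadingPrincipalMinor, ← (algebraMap ℝ ℂ).injective.eq_iff, map_zero, RingHom.map_det]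
  refine exists_mulVec_eq_zero_iff.mp ⟨fun j => ⅟(z ^ 2) ^ (j : ℕ), fun hv => ?_, ?_⟩
  · simpa using congrFun hv ⟨0, hk⟩
  · ext i
    rw [RingHom.mapMatrix_apply, hurwitzMatrix_submatrix_mulVec_pow hkn hnk hf]
    exact aeval_invOf_sq_hurwitzRowPolynomial_eq_zero hf hpos hneg i

end HurwitzMatrix

lemma aeval_neg_I_mul_eq_zero {f : ℝ[X]} {ω : ℝ} (h : aeval (Complex.I * ω) f = 0) :
    aeval (-(Complex.I * ω)) f = 0 := by
  have hconj : starRingEnd ℂ (Complex.I * ω) = -(Complex.I * ω) := by simp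
  rw [← hconj, aeval_conj, h, map_zero]

/-- If a real `n × n` matrix (`n ≥ 2`) has a nonzero purely imaginary eigenvalue `iω`,
then the `(n-1)`-th leading principal minor of the Hurwitz matrix of its characteristic
polynomial vanishes. -/
theorem delta_eq_zero_of_imaginary_eigenvalue (n : ℕ) (hn : 2 ≤ n)
    (A : Matrix (Fin n) (Fin n) ℝ) (ω : ℝ) (hω : ω ≠ 0)
    (heig : ((A.charpoly).map (algebraMap ℝ ℂ)).IsRoot (Complex.I * ω)) :
    leadingPrincipalMinor (hurwitzMatrix n A.charpoly) (n - 1) (Nat.sub_le n 1) = 0 := by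
  have hroot : aeval (Complex.I * ω) A.charpoly = 0 := by
    rwa [IsRoot.def, eval_map_algebraMap] at heig
  exact delta_eq_zero_of_imaginary_eigenvalue_general (by omega) _ (by omega) (by simp)
    (by simpa using hω) hroot (aeval_neg_I_mul_eq_zero hroot)
end

section
/- Let $T_m$ be the $m\times m$ real matrix with $(i,j)$ entry equal to $1/j$ if $i \le j$ and $0$ otherwise, and for each permutation $\theta$ of $\{1,\ldots,m\}$ with permutation matrix $P_\theta$ set $A_\theta = P_\theta T_m$. Then the images of the standard simplex under the matrices $A_\theta$ cover the simplex: for every $x \in S_m$ there exist a permutation $\theta$ and $y \in S_m$ such that $x = A_\theta y$. Consequently $S_m = \bigcup_{\theta} A_\theta(S_m)$. -/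
/-!
If `z 0 ≥ ⋯ ≥ z (m - 1) ≥ 0`, then, with `z m = 0`, the system `T_m y = z` is solved by
`y j = (j + 1) * (z j - z (j + 1))`: the rows of `T_m` become telescoping sums, and `y ≥ 0`. Sorting
an arbitrary `x ≥ 0` decreasingly thus gives `x = A_θ y` with `y ≥ 0`. The columns of `A_θ` sum to
`1`, so `y` has the same coordinate sum as `x`.
-/

open Matrix

/-- The upper-triangular matrix `T_m` whose `(i,j)` entry (with `1`-based indices)
is `1/j` when `i ≤ j` and `0` otherwise. -/
noncomputable def Tmat (m : ℕ) : Matrix (Fin m) (Fin m) ℝ :=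
  fun i j => if i ≤ j then 1 / ((j : ℕ) + 1) else 0

/-- The permutation matrix of `θ`: its `(i,j)` entry is `1` if `j = θ i` and `0` otherwise. -/
def permMat {m : ℕ} (θ : Equiv.Perm (Fin m)) : Matrix (Fin m) (Fin m) ℝ :=
  fun i j => if θ i = j then 1 else 0

/-- The weighted difference substitution (WDS) matrix `A_θ = P_θ T_m`. -/
noncomputable def WDSmat {m : ℕ} (θ : Equiv.Perm (Fin m)) : Matrix (Fin m) (Fin m) ℝ :=
  permMat θ * Tmat m

lemma permMat_eq_permMatrix {m : ℕ} (θ : Equiv.Perm (Fin m)) : permMat θ = θ.permMatrix ℝ := by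
  ext i j
  simp [permMat, PEquiv.toMatrix_apply, Equiv.toPEquiv_apply, eq_comm]

lemma Tmat_mem_colStochastic (m : ℕ) : Tmat m ∈ colStochastic ℝ (Fin m) := by
  refine mem_colStochastic_iff_sum.2 ⟨fun i j ↦ ?_, fun j ↦ ?_⟩
  · unfold Tmat
    positivity
  · calc
      ∑ i, Tmat m i j = ∑ _i ∈ Finset.Iic j, 1 / ((j : ℝ) + 1) := by
        simp [Tmat, ← Finset.sum_filter, Finset.filter_ge_eq_Iic]
      _ = 1 := by
        rw [Finset.sum_const, Fin.card_Iic, nsmul_eq_mul]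
        push_cast
        field_simp

lemma WDSmat_mem_colStochastic {m : ℕ} (θ : Equiv.Perm (Fin m)) :
    WDSmat θ ∈ colStochastic ℝ (Fin m) := by
  rw [WDSmat, permMat_eq_permMatrix]
  exact mul_mem permMatrix_mem_colStochastic (Tmat_mem_colStochastic m)

lemma WDSmat_mulVec {m : ℕ} (θ : Equiv.Perm (Fin m)) (y : Fin m → ℝ) :
    WDSmat θ *ᵥ y = (Tmat m *ᵥ y) ∘ θ := by
  rw [WDSmat, ← mulVec_mulVec, permMat_eq_permMatrix, permMatrix_mulVec]

lemma Tmat_mulVec_apply {m : ℕ} (y : Fin m → ℝ) (i : Fin m) :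
    (Tmat m *ᵥ y) i = ∑ j ∈ Finset.Ici i, y j / ((j : ℕ) + 1) := by
  simp [mulVec, dotProduct, Tmat, ← Finset.sum_filter, Finset.filter_le_eq_Ici, div_eq_inv_mul]

lemma Tmat_mulVec_weighted_sub_succ {m : ℕ} (z : ℕ → ℝ) (i : Fin m) :
    (Tmat m *ᵥ fun j ↦ ((j : ℕ) + 1) * (z j - z (j + 1))) i = z i - z m := by
  calc
    _ = ∑ j ∈ Finset.Ici i, (z j - z (j + 1)) := by
      rw [Tmat_mulVec_apply]
      exact Finset.sum_congr rfl fun j _ ↦ mul_div_cancel_left₀ _ (by positivity)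
    _ = ∑ j ∈ Finset.Ico (i : ℕ) m, (z j - z (j + 1)) := by
      rw [← Fin.map_valEmbedding_Ici, Finset.sum_map]
      rfl
    _ = z i - z m := by
      simpa only [neg_sub_neg] using Finset.sum_Ico_sub (fun k ↦ -z k) i.is_le'

lemma antitone_extend_val_zero {α : Type*} [Preorder α] [Zero α] {m : ℕ} {z : Fin m → α}
    (hz : Antitone z) (hz₀ : 0 ≤ z) : Antitone (Function.extend Fin.val z 0) := by
  have extend_of_lt {k : ℕ} (hk : k < m) : Function.extend Fin.val z 0 k = z ⟨k, hk⟩ :=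
    Fin.val_injective.extend_apply z 0 ⟨k, hk⟩
  have extend_of_le {k : ℕ} (hk : m ≤ k) : Function.extend Fin.val z 0 k = 0 :=
    Function.extend_apply' _ _ _ fun ⟨i, hi⟩ ↦ (hi ▸ i.isLt).not_ge hk
  intro k l hkl
  rcases lt_or_ge l m with hl | hl
  · rw [extend_of_lt hl, extend_of_lt (hkl.trans_lt hl)]
    exact hz hkl
  · rw [extend_of_le hl]
    rcases lt_or_ge k m with hk | hk
    · rw [extend_of_lt hk]
      exact hz₀ _
    · rw [extend_of_le hk]

lemma exists_nonneg_Tmat_mulVec_eq {m : ℕ} {z : Fin m → ℝ} (hz : Antitone z) (hz₀ : 0 ≤ z) :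
    ∃ y, 0 ≤ y ∧ Tmat m *ᵥ y = z := by
  let w : ℕ → ℝ := Function.extend Fin.val z 0
  have w_antitone : Antitone w := antitone_extend_val_zero hz hz₀
  have w_val (i : Fin m) : w i = z i := Fin.val_injective.extend_apply z 0 i
  have w_m : w m = 0 := Function.extend_apply' _ _ _ fun ⟨i, hi⟩ ↦ i.isLt.ne hi
  refine ⟨fun j ↦ ((j : ℕ) + 1) * (w j - w (j + 1)), fun j ↦ ?_, funext fun i ↦ ?_⟩
  · exact mul_nonneg (by positivity) (sub_nonneg.2 (w_antitone (Nat.le_succ j)))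
  · rw [Tmat_mulVec_weighted_sub_succ, w_m, sub_zero, w_val]

lemma exists_perm_antitone_comp {α : Type*} [LinearOrder α] {m : ℕ} (x : Fin m → α) :
    ∃ σ : Equiv.Perm (Fin m), Antitone (x ∘ σ) :=
  ⟨_, Tuple.monotone_sort (OrderDual.toDual ∘ x)⟩

theorem wds_images_cover_simplex_general {m : ℕ} {x : Fin m → ℝ} (hx : 0 ≤ x) :
    ∃ θ : Equiv.Perm (Fin m), ∃ y : Fin m → ℝ,
      0 ≤ y ∧ ∑ i, y i = ∑ i, x i ∧ x = WDSmat θ *ᵥ y := by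
  obtain ⟨σ, x_sorted⟩ := exists_perm_antitone_comp x
  obtain ⟨y, y_nonneg, hy⟩ := exists_nonneg_Tmat_mulVec_eq x_sorted fun i ↦ hx (σ i)
  have hxy : x = WDSmat σ⁻¹ *ᵥ y := by
    rw [WDSmat_mulVec, hy]
    ext i
    simp
  refine ⟨σ⁻¹, y, y_nonneg, ?_, hxy⟩
  rw [hxy, sum_mulVec_of_mem_colStochastic (WDSmat_mem_colStochastic σ⁻¹)]

/-- The images of the standard simplex under the WDS matrices cover the simplex:
every `x ∈ S_m` is of the form `A_θ y` for some permutation `θ` and some `y ∈ S_m`. -/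
theorem wds_images_cover_simplex (m : ℕ) (x : Fin m → ℝ)
    (hx : x ∈ stdSimplex ℝ (Fin m)) :
    ∃ θ : Equiv.Perm (Fin m), ∃ y ∈ stdSimplex ℝ (Fin m), x = (WDSmat θ).mulVec y := by
  obtain ⟨θ, y, y_nonneg, y_sum, hxy⟩ := wds_images_cover_simplex_general hx.1
  exact ⟨θ, y, ⟨y_nonneg, y_sum.trans hx.2⟩, hxy⟩
end
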